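/- Let A satisfy (H1) and β_i > -2 for all i ∈ I. For any constants c_1,...,c_n ∈ ℝ there is a unique solution u = (u_1,...,u_n), continuous at r = 0 and defined for all r > 0, of the radial system u_i''(r) + (1/r) u_i'(r) + Σ_{j=1}^n a_{ij} r^{β_j} e^{u_j(r)} = 0 for i ∈ I with initial values u_i(0) = c_i for all i ∈ I. (The solution need not have finite energy.) -/

import Mathlib

open Set MeasureTheory

/-- Hypothesis (H1): symmetric, nonnegative entries, irreducible, invertible. -/
def H1 {n : ℕ} (A : Matrix (Fin n) (Fin n) ℝ) : Prop :=
  A.IsSymm ∧ (∀ i j, 0 ≤ A i j) ∧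
  (∀ S : Finset (Fin n), S.Nonempty → S ≠ Finset.univ → ∃ i ∈ S, ∃ j ∈ Sᶜ, A i j ≠ 0) ∧
  IsUnit A.det

/-- `u` solves the radial system on (0,∞), is continuous at r = 0 (from the right)
and takes the initial values `c` there. -/
def IsIVPSolution {n : ℕ} (A : Matrix (Fin n) (Fin n) ℝ) (β : Fin n → ℝ)
    (c : Fin n → ℝ) (u : Fin n → ℝ → ℝ) : Prop :=
  (∀ i, ContinuousWithinAt (u i) (Set.Ici 0) 0) ∧
  (∀ i, u i 0 = c i) ∧
  (∀ i, ∀ r > (0:ℝ), ContDiffAt ℝ 2 (u i) r) ∧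
  (∀ i, ∀ r > (0:ℝ),
    deriv (deriv (u i)) r + (1 / r) * deriv (u i) r
      + ∑ j, A i j * r ^ β j * Real.exp (u j r) = 0)

/-!
With `t = log r` and `w t = u (exp t)` the system becomes `wᵢ'' = -∑ⱼ aᵢⱼ exp (γⱼ t) exp (wⱼ)` on
`ℝ`, where `γⱼ = βⱼ + 2 > 0`, with `w → c` at `-∞`. Since the right-hand side is nonpositive, `w'`
is antitone; as `w` converges at `-∞`, this forces `w' → 0` there and hence `w ≤ c` everywhere. So
the exponential nonlinearity may be evaluated at `w ⊓ c` instead of `w`, which makes it bounded and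
Lipschitz, both with a constant `q t` that has a second primitive `g` vanishing at `-∞`. Because
`φ = exp (2 g)` satisfies `φ'' ≥ 2 q φ`, integrating twice from `-∞` is a `1/2`-contraction for the
norm `sup ‖w - c‖ / φ`, and Banach's fixed point theorem applies on the whole line at once.
-/

open Filter Topology
open scoped BoundedContinuousFunction

section Primitives

variable {E : Type*} [NormedAddCommGroup E] [NormedSpace ℝ E]
  {f f' : ℝ → E} {g g' : ℝ → ℝ} {l : E} {m : ℝ}

lemma norm_sub_le_sub_of_norm_deriv_le (hf : ∀ t, HasDerivAt f (f' t) t)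
    (hg : ∀ t, HasDerivAt g (g' t) t) (hle : ∀ t, ‖f' t‖ ≤ g' t) {a b : ℝ} (hab : a ≤ b) :
    ‖f b - f a‖ ≤ g b - g a :=
  image_norm_le_of_norm_deriv_right_le_deriv_boundary (f := fun t ↦ f t - f a)
    (B := fun t ↦ g t - g a)
    (fun t _ ↦ ((hf t).sub_const (f a)).continuousAt.continuousWithinAt)
    (fun t _ ↦ ((hf t).sub_const (f a)).hasDerivWithinAt) (by simp)
    (fun t ↦ (hg t).sub_const (g a)) (fun t _ ↦ hle t) (Set.right_mem_Icc.2 hab)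

lemma norm_sub_le_sub_of_tendsto_atBot (hf : ∀ t, HasDerivAt f (f' t) t)
    (hg : ∀ t, HasDerivAt g (g' t) t) (hle : ∀ t, ‖f' t‖ ≤ g' t)
    (hfl : Tendsto f atBot (𝓝 l)) (hgm : Tendsto g atBot (𝓝 m)) (t : ℝ) :
    ‖f t - l‖ ≤ g t - m :=
  le_of_tendsto_of_tendsto (hfl.const_sub (f t)).norm (hgm.const_sub (g t)) <|
    (eventually_le_atBot t).mono fun _ hs ↦ norm_sub_le_sub_of_norm_deriv_le hf hg hle hs

lemma exists_tendsto_atBot_of_norm_deriv_le [CompleteSpace E] (hf : ∀ t, HasDerivAt f (f' t) t)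
    (hg : ∀ t, HasDerivAt g (g' t) t) (hle : ∀ t, ‖f' t‖ ≤ g' t)
    (hgm : Tendsto g atBot (𝓝 m)) : ∃ l, Tendsto f atBot (𝓝 l) := by
  have dist_le (a b : ℝ) : dist (f a) (f b) ≤ dist (g a) (g b) := by
    wlog hab : a ≤ b generalizing a b
    · simpa only [dist_comm] using this b a (le_of_not_ge hab)
    rw [dist_comm, dist_comm (g a), dist_eq_norm, Real.dist_eq]
    exact (norm_sub_le_sub_of_norm_deriv_le hf hg hle hab).trans (le_abs_self _)
  have hg_cauchy := cauchy_map_iff'.1 hgm.cauchy_map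
  rw [tendsto_uniformity_iff_dist_tendsto_zero] at hg_cauchy
  refine cauchy_map_iff_exists_tendsto.1 (cauchy_map_iff'.2 ?_)
  rw [tendsto_uniformity_iff_dist_tendsto_zero]
  exact squeeze_zero (fun _ ↦ dist_nonneg) (fun _ ↦ dist_le _ _) hg_cauchy

lemma exists_primitive_tendsto_atBot [CompleteSpace E] {h : ℝ → E} (hh : Continuous h)
    (hg : ∀ t, HasDerivAt g (g' t) t) (hle : ∀ t, ‖h t‖ ≤ g' t)
    (hgm : Tendsto g atBot (𝓝 m)) (l : E) :
    ∃ f : ℝ → E, (∀ t, HasDerivAt f (h t) t) ∧ Tendsto f atBot (𝓝 l) := by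
  have hprim (t : ℝ) := (hh.integral_hasStrictDerivAt 0 t).hasDerivAt
  obtain ⟨k, hk⟩ := exists_tendsto_atBot_of_norm_deriv_le hprim hg hle hgm
  exact ⟨fun t ↦ (∫ s in (0 : ℝ)..t, h s) + (l - k), fun t ↦ (hprim t).add_const _,
    by simpa using hk.add_const (l - k)⟩

end Primitives

/-- `w` is the second primitive of `f` from `-∞` with value `c` there: `w'' = f` on `ℝ`, and
`w → c`, `w' → 0` at `-∞`. -/
structure IsSecondPrimitive {E : Type*} [NormedAddCommGroup E] [NormedSpace ℝ E]
    (f : ℝ → E) (c : E) (w : ℝ → E) : Prop where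
  differentiable : Differentiable ℝ w
  hasDerivAt_deriv : ∀ t, HasDerivAt (deriv w) (f t) t
  tendsto_deriv : Tendsto (deriv w) atBot (𝓝 0)
  tendsto : Tendsto w atBot (𝓝 c)

namespace IsSecondPrimitive

section NormedSpace

variable {E : Type*} [NormedAddCommGroup E] [NormedSpace ℝ E]
  {f f₁ f₂ w w₁ w₂ : ℝ → E} {c c₁ c₂ : E} {q g : ℝ → ℝ} {m : ℝ}

lemma hasDerivAt (hw : IsSecondPrimitive f c w) (t : ℝ) : HasDerivAt w (deriv w t) t :=
  (hw.differentiable t).hasDerivAt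

lemma of_hasDerivAt {p : ℝ → E} (hw : ∀ t, HasDerivAt w (p t) t)
    (hp : ∀ t, HasDerivAt p (f t) t) (hp0 : Tendsto p atBot (𝓝 0))
    (hwc : Tendsto w atBot (𝓝 c)) : IsSecondPrimitive f c w := by
  obtain rfl : deriv w = p := deriv_eq hw
  exact ⟨fun t ↦ (hw t).differentiableAt, hp, hp0, hwc⟩

lemma sub (h₁ : IsSecondPrimitive f₁ c₁ w₁) (h₂ : IsSecondPrimitive f₂ c₂ w₂) :
    IsSecondPrimitive (fun t ↦ f₁ t - f₂ t) (c₁ - c₂) (fun t ↦ w₁ t - w₂ t) :=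
  of_hasDerivAt (fun t ↦ (h₁.hasDerivAt t).fun_sub (h₂.hasDerivAt t))
    (fun t ↦ (h₁.hasDerivAt_deriv t).fun_sub (h₂.hasDerivAt_deriv t))
    (by simpa using h₁.tendsto_deriv.sub h₂.tendsto_deriv) (h₁.tendsto.sub h₂.tendsto)

lemma const_smul (k : ℝ) (h : IsSecondPrimitive f c w) :
    IsSecondPrimitive (fun t ↦ k • f t) (k • c) (fun t ↦ k • w t) :=
  of_hasDerivAt (fun t ↦ (h.hasDerivAt t).fun_const_smul k)
    (fun t ↦ (h.hasDerivAt_deriv t).fun_const_smul k)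
    (by simpa using h.tendsto_deriv.const_smul k) (h.tendsto.const_smul k)

lemma sum {ι : Type*} {s : Finset ι} {f w : ι → ℝ → E} {c : ι → E}
    (h : ∀ i ∈ s, IsSecondPrimitive (f i) (c i) (w i)) :
    IsSecondPrimitive (fun t ↦ ∑ i ∈ s, f i t) (∑ i ∈ s, c i) (fun t ↦ ∑ i ∈ s, w i t) :=
  of_hasDerivAt (fun t ↦ HasDerivAt.fun_sum fun i hi ↦ (h i hi).hasDerivAt t)
    (fun t ↦ HasDerivAt.fun_sum fun i hi ↦ (h i hi).hasDerivAt_deriv t)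
    (by simpa using tendsto_finsetSum s fun i hi ↦ (h i hi).tendsto_deriv)
    (tendsto_finsetSum s fun i hi ↦ (h i hi).tendsto)

lemma contDiff_two (hw : IsSecondPrimitive f c w) (hf : Continuous f) : ContDiff ℝ 2 w := by
  have hderiv : ContDiff ℝ 1 (deriv w) := by
    rw [contDiff_one_iff_deriv, deriv_eq hw.hasDerivAt_deriv]
    exact ⟨fun t ↦ (hw.hasDerivAt_deriv t).differentiableAt, hf⟩
  rw [← one_add_one_eq_two, contDiff_succ_iff_deriv]
  exact ⟨hw.differentiable, by simp, hderiv⟩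

lemma norm_sub_le (hw : IsSecondPrimitive f c w) (hg : IsSecondPrimitive q m g)
    (hfq : ∀ t, ‖f t‖ ≤ q t) (t : ℝ) : ‖w t - c‖ ≤ g t - m := by
  have hderiv (s : ℝ) : ‖deriv w s‖ ≤ deriv g s := by
    simpa using norm_sub_le_sub_of_tendsto_atBot hw.hasDerivAt_deriv hg.hasDerivAt_deriv hfq
      hw.tendsto_deriv hg.tendsto_deriv s
  exact norm_sub_le_sub_of_tendsto_atBot hw.hasDerivAt hg.hasDerivAt hderiv hw.tendsto hg.tendsto t

lemma exists_of_norm_le [CompleteSpace E] (hf : Continuous f) (hg : IsSecondPrimitive q m g)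
    (hfq : ∀ t, ‖f t‖ ≤ q t) (c : E) : ∃ w, IsSecondPrimitive f c w := by
  obtain ⟨p, hp, hp0⟩ :=
    exists_primitive_tendsto_atBot hf hg.hasDerivAt_deriv hfq hg.tendsto_deriv 0
  have hpg (t : ℝ) : ‖p t‖ ≤ deriv g t := by
    simpa using norm_sub_le_sub_of_tendsto_atBot hp hg.hasDerivAt_deriv hfq hp0 hg.tendsto_deriv t
  have hpc : Continuous p := continuous_iff_continuousAt.2 fun t ↦ (hp t).continuousAt
  obtain ⟨w, hw, hwc⟩ := exists_primitive_tendsto_atBot hpc hg.hasDerivAt hpg hg.tendsto c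
  exact ⟨w, of_hasDerivAt hw hp hp0 hwc⟩

end NormedSpace

lemma exp {q g : ℝ → ℝ} {m : ℝ} (hg : IsSecondPrimitive q m g) :
    IsSecondPrimitive (fun t ↦ (q t + deriv g t ^ 2) * Real.exp (g t)) (Real.exp m)
      (fun t ↦ Real.exp (g t)) := by
  have hexp : Tendsto (fun t ↦ Real.exp (g t)) atBot (𝓝 (Real.exp m)) :=
    (Real.continuous_exp.tendsto m).comp hg.tendsto
  refine of_hasDerivAt (p := fun t ↦ deriv g t * Real.exp (g t)) (fun t ↦ ?_) (fun t ↦ ?_)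
    (by simpa using hg.tendsto_deriv.mul hexp) hexp
  · exact (hg.hasDerivAt t).exp.congr_deriv (mul_comm _ _)
  · exact ((hg.hasDerivAt_deriv t).mul (hg.hasDerivAt t).exp).congr_deriv (by ring)

end IsSecondPrimitive

lemma isSecondPrimitive_const_mul_exp (a : ℝ) {γ : ℝ} (hγ : 0 < γ) :
    IsSecondPrimitive (fun t ↦ a * Real.exp (γ * t)) 0
      (fun t ↦ a / γ ^ 2 * Real.exp (γ * t)) := by
  have hderiv (b t : ℝ) :
      HasDerivAt (fun t ↦ b * Real.exp (γ * t)) (b * γ * Real.exp (γ * t)) t :=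
    (((hasDerivAt_id t).const_mul γ).exp.const_mul b).congr_deriv (by simp; ring)
  have htendsto (b : ℝ) : Tendsto (fun t ↦ b * Real.exp (γ * t)) atBot (𝓝 0) := by
    simpa using (Real.tendsto_exp_atBot.comp (tendsto_id.const_mul_atBot hγ)).const_mul b
  refine .of_hasDerivAt (p := fun t ↦ a / γ * Real.exp (γ * t)) (fun t ↦ ?_) (fun t ↦ ?_)
    (htendsto _) (htendsto _)
  · exact (hderiv _ t).congr_deriv (by field_simp)
  · exact (hderiv _ t).congr_deriv (by field_simp)

lemma isSecondPrimitive_pi {ι : Type*} [Fintype ι] {f w : ℝ → ι → ℝ} {c : ι → ℝ} :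
    IsSecondPrimitive f c w ↔
      ∀ i, IsSecondPrimitive (fun t ↦ f t i) (c i) (fun t ↦ w t i) := by
  constructor
  · intro h i
    exact .of_hasDerivAt (fun t ↦ hasDerivAt_pi.1 (h.hasDerivAt t) i)
      (fun t ↦ hasDerivAt_pi.1 (h.hasDerivAt_deriv t) i) (tendsto_pi_nhds.1 h.tendsto_deriv i)
      (tendsto_pi_nhds.1 h.tendsto i)
  · intro h
    exact .of_hasDerivAt (fun t ↦ hasDerivAt_pi.2 fun i ↦ (h i).hasDerivAt t)
      (fun t ↦ hasDerivAt_pi.2 fun i ↦ (h i).hasDerivAt_deriv t)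
      (tendsto_pi_nhds.2 fun i ↦ (h i).tendsto_deriv) (tendsto_pi_nhds.2 fun i ↦ (h i).tendsto)

section Concave

variable {f p w : ℝ → ℝ} {c : ℝ}

lemma tendsto_deriv_atBot_of_antitone (hw : ∀ t, HasDerivAt w (p t) t) (hp : Antitone p)
    (hwc : Tendsto w atBot (𝓝 c)) : Tendsto p atBot (𝓝 0) := by
  have slope (t : ℝ) : ∃ s ∈ Set.Ioo t (t + 1), p s = w (t + 1) - w t := by
    simpa using exists_hasDerivAt_eq_slope w p (lt_add_one t)
      (fun s _ ↦ (hw s).continuousAt.continuousWithinAt) fun s _ ↦ hw s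
  have increment : Tendsto (fun t ↦ w (t + 1) - w t) atBot (𝓝 0) := by
    simpa using (hwc.comp (tendsto_atBot_add_const_right _ 1 tendsto_id)).sub hwc
  refine tendsto_of_tendsto_of_tendsto_of_le_of_le increment
    (increment.comp (tendsto_atBot_add_const_right _ (-1) tendsto_id)) (fun t ↦ ?_) fun t ↦ ?_
  · obtain ⟨s, hs, hps⟩ := slope t
    exact hps ▸ hp hs.1.le
  · obtain ⟨s, hs, hps⟩ := slope (t + -1)
    simpa [hps] using hp (show s ≤ t by linarith [hs.2])

lemma IsSecondPrimitive.of_nonpos (hw : ∀ t, HasDerivAt w (p t) t)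
    (hp : ∀ t, HasDerivAt p (f t) t) (hf : f ≤ 0) (hwc : Tendsto w atBot (𝓝 c)) :
    IsSecondPrimitive f c w :=
  .of_hasDerivAt hw hp
    (tendsto_deriv_atBot_of_antitone hw (antitone_of_hasDerivAt_nonpos hp hf) hwc) hwc

lemma IsSecondPrimitive.le_of_nonpos (hw : IsSecondPrimitive f c w) (hf : f ≤ 0) (t : ℝ) :
    w t ≤ c := by
  have hderiv : deriv w ≤ 0 :=
    (antitone_of_hasDerivAt_nonpos hw.hasDerivAt_deriv hf).ge_of_tendsto hw.tendsto_deriv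
  exact (antitone_of_hasDerivAt_nonpos hw.hasDerivAt hderiv).ge_of_tendsto hw.tendsto t

end Concave

section Picard

variable {E : Type*} [NormedAddCommGroup E] [NormedSpace ℝ E] {q g : ℝ → ℝ} {c : E}

/-- The function `c + exp (2 g) • z`. This parametrization turns the weighted norm
`sup ‖w - c‖ / exp (2 g)` into the sup norm of the bounded continuous function `z`. -/
noncomputable def weightedShift (g : ℝ → ℝ) (c : E) (z : ℝ →ᵇ E) (t : ℝ) : E :=
  c + Real.exp (2 * g t) • z t

lemma norm_weightedShift_sub (g : ℝ → ℝ) (c : E) (z z' : ℝ →ᵇ E) (t : ℝ) :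
    ‖weightedShift g c z t - weightedShift g c z' t‖ =
      Real.exp (2 * g t) * dist (z t) (z' t) := by
  simp [weightedShift, ← smul_sub, norm_smul, dist_eq_norm]

lemma continuous_weightedShift (hg : Continuous g) (c : E) (z : ℝ →ᵇ E) :
    Continuous (weightedShift g c z) := by
  unfold weightedShift
  fun_prop

lemma IsSecondPrimitive.exists_eq_weightedShift {f w : ℝ → E} (hw : IsSecondPrimitive f c w)
    (hg : IsSecondPrimitive q 0 g) (hfq : ∀ t, ‖f t‖ ≤ q t) :
    ∃ z : ℝ →ᵇ E, w = weightedShift g c z := by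
  have hgc := hg.differentiable.continuous
  have hwc := hw.differentiable.continuous
  have hbound (t : ℝ) : ‖Real.exp (-(2 * g t)) • (w t - c)‖ ≤ 1 := by
    have hwg : ‖w t - c‖ ≤ g t := by simpa using hw.norm_sub_le hg hfq t
    have hg_le : g t ≤ Real.exp (2 * g t) := by
      linarith [(norm_nonneg _).trans hwg, Real.add_one_le_exp (2 * g t)]
    rw [norm_smul, Real.norm_of_nonneg (Real.exp_pos _).le, Real.exp_neg,
      inv_mul_le_one₀ (Real.exp_pos _)]
    exact hwg.trans hg_le
  refine ⟨.ofNormedAddCommGroup (fun t ↦ Real.exp (-(2 * g t)) • (w t - c)) (by fun_prop) 1 hbound,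
    funext fun t ↦ ?_⟩
  simp [weightedShift, smul_smul, ← Real.exp_add]

lemma IsSecondPrimitive.norm_sub_le_half_mul_exp {f₁ f₂ w₁ w₂ : ℝ → E}
    (h₁ : IsSecondPrimitive f₁ c w₁) (h₂ : IsSecondPrimitive f₂ c w₂)
    (hg : IsSecondPrimitive q 0 g) {D : ℝ} (hD : 0 ≤ D)
    (hle : ∀ t, ‖f₁ t - f₂ t‖ ≤ q t * (Real.exp (2 * g t) * D)) (t : ℝ) :
    ‖w₁ t - w₂ t‖ ≤ D / 2 * Real.exp (2 * g t) := by
  have hexp : IsSecondPrimitive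
      (fun s ↦ D / 2 * ((2 * q s + deriv (fun t ↦ 2 * g t) s ^ 2) * Real.exp (2 * g s)))
      (D / 2) (fun s ↦ D / 2 * Real.exp (2 * g s)) := by
    simpa using (hg.const_smul 2).exp.const_smul (D / 2)
  have hle_exp (s : ℝ) : ‖f₁ s - f₂ s‖ ≤
      D / 2 * ((2 * q s + deriv (fun t ↦ 2 * g t) s ^ 2) * Real.exp (2 * g s)) :=
    calc ‖f₁ s - f₂ s‖ ≤ D / 2 * (2 * q s * Real.exp (2 * g s)) := (hle s).trans_eq (by ring)
      _ ≤ _ := by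
        gcongr
        exact le_add_of_nonneg_right (sq_nonneg _)
  have hdiff := (h₁.sub h₂).norm_sub_le hexp hle_exp t
  rw [sub_self, sub_zero] at hdiff
  linarith

lemma dist_le_half_mul_dist_of_isSecondPrimitive {F : ℝ → E → E} {z₁ z₂ z₁' z₂' : ℝ →ᵇ E}
    (hg : IsSecondPrimitive q 0 g) (hq : ∀ t, 0 ≤ q t)
    (hlip : ∀ t x y, ‖F t x - F t y‖ ≤ q t * ‖x - y‖)
    (h₁ : IsSecondPrimitive (fun t ↦ F t (weightedShift g c z₁ t)) c (weightedShift g c z₁'))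
    (h₂ : IsSecondPrimitive (fun t ↦ F t (weightedShift g c z₂ t)) c (weightedShift g c z₂')) :
    dist z₁' z₂' ≤ 1 / 2 * dist z₁ z₂ := by
  have hle (s : ℝ) : ‖F s (weightedShift g c z₁ s) - F s (weightedShift g c z₂ s)‖ ≤
      q s * (Real.exp (2 * g s) * dist z₁ z₂) := by
    refine (hlip s _ _).trans (mul_le_mul_of_nonneg_left ?_ (hq s))
    rw [norm_weightedShift_sub]
    gcongr
    exact BoundedContinuousFunction.dist_coe_le_dist s
  refine (BoundedContinuousFunction.dist_le (by positivity)).2 fun t ↦ ?_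
  have hdist := h₁.norm_sub_le_half_mul_exp h₂ hg dist_nonneg hle t
  rw [norm_weightedShift_sub, mul_comm] at hdist
  exact (le_of_mul_le_mul_right hdist (Real.exp_pos _)).trans_eq (by ring)

theorem existsUnique_isSecondPrimitive [CompleteSpace E] {F : ℝ → E → E}
    (hF : Continuous (Function.uncurry F)) (hg : IsSecondPrimitive q 0 g)
    (hbound : ∀ t x, ‖F t x‖ ≤ q t) (hlip : ∀ t x y, ‖F t x - F t y‖ ≤ q t * ‖x - y‖) (c : E) :
    ∃! w, IsSecondPrimitive (fun t ↦ F t (w t)) c w := by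
  have hq (t : ℝ) : 0 ≤ q t := (norm_nonneg _).trans (hbound t 0)
  have exists_step (z : ℝ →ᵇ E) : ∃ z' : ℝ →ᵇ E,
      IsSecondPrimitive (fun t ↦ F t (weightedShift g c z t)) c (weightedShift g c z') := by
    have hcont : Continuous fun t ↦ F t (weightedShift g c z t) :=
      hF.comp (continuous_id.prodMk (continuous_weightedShift hg.differentiable.continuous c z))
    obtain ⟨w, hw⟩ := IsSecondPrimitive.exists_of_norm_le hcont hg (fun t ↦ hbound t _) c
    obtain ⟨z', rfl⟩ := hw.exists_eq_weightedShift hg fun t ↦ hbound t _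
    exact ⟨z', hw⟩
  choose T hT using exists_step
  have hT_contracting : ContractingWith (1 / 2) T :=
    ⟨by norm_num, .of_dist_le_mul fun z z' ↦ by
      simpa using dist_le_half_mul_dist_of_isSecondPrimitive hg hq hlip (hT z) (hT z')⟩
  set z := hT_contracting.fixedPoint T
  have hz : IsSecondPrimitive (fun t ↦ F t (weightedShift g c z t)) c (weightedShift g c z) := by
    simpa only [z, hT_contracting.fixedPoint_isFixedPt.eq] using hT z
  refine ⟨weightedShift g c z, hz, fun v hv ↦ ?_⟩
  obtain ⟨y, rfl⟩ := hv.exists_eq_weightedShift hg fun t ↦ hbound t _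
  have hdist := dist_le_half_mul_dist_of_isSecondPrimitive hg hq hlip hv hz
  have hyz : y = z := dist_le_zero.1 (by linarith)
  rw [hyz]

end Picard

section LogarithmicSystem

lemma abs_exp_inf_sub_exp_inf_le (x y c : ℝ) :
    |Real.exp (x ⊓ c) - Real.exp (y ⊓ c)| ≤ Real.exp c * |x - y| := by
  have hexp : |Real.exp (x ⊓ c) - Real.exp (y ⊓ c)| ≤ Real.exp c * |x ⊓ c - y ⊓ c| :=
    Convex.norm_image_sub_le_of_norm_hasDerivWithin_le
      (fun s _ ↦ (Real.hasDerivAt_exp s).hasDerivWithinAt)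
      (fun s hs ↦ by simpa using hs) (convex_Iic c)
      (Set.mem_Iic.2 inf_le_right) (Set.mem_Iic.2 inf_le_right)
  exact hexp.trans (mul_le_mul_of_nonneg_left (abs_inf_sub_inf_le_abs x y c) (Real.exp_pos c).le)

variable {ι : Type*} [Fintype ι]

/-- The nonlinearity `(∑ⱼ aᵢⱼ exp (γⱼ t) exp (xⱼ))ᵢ` of the radial system in the variable
`t = log r`, where `γⱼ = βⱼ + 2`; the system itself reads `w'' = -expField A γ t w`. -/
noncomputable def expField (A : Matrix ι ι ℝ) (γ : ι → ℝ) (t : ℝ) (x : ι → ℝ) (i : ι) : ℝ :=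
  ∑ j, A i j * Real.exp (γ j * t) * Real.exp (x j)

variable {A : Matrix ι ι ℝ} {γ : ι → ℝ}

lemma continuous_expField (A : Matrix ι ι ℝ) (γ : ι → ℝ) :
    Continuous (Function.uncurry (expField A γ)) := by
  unfold Function.uncurry expField
  fun_prop

lemma expField_nonneg (hA : ∀ i j, 0 ≤ A i j) (t : ℝ) (x : ι → ℝ) (i : ι) :
    0 ≤ expField A γ t x i :=
  Finset.sum_nonneg fun j _ ↦ mul_nonneg (mul_nonneg (hA i j) (Real.exp_pos _).le)
    (Real.exp_pos _).le

lemma expField_mono (hA : ∀ i j, 0 ≤ A i j) (t : ℝ) : Monotone (expField A γ t) :=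
  fun x y hxy i ↦ Finset.sum_le_sum fun j _ ↦ by
    have := hA i j
    gcongr
    exact hxy j

lemma exists_isSecondPrimitive_sum_expField (A : Matrix ι ι ℝ) (hγ : ∀ j, 0 < γ j) (c : ι → ℝ) :
    ∃ g, IsSecondPrimitive (fun t ↦ ∑ i, expField A γ t c i) 0 g := by
  have h := IsSecondPrimitive.sum (s := Finset.univ) fun i _ ↦
    IsSecondPrimitive.sum (s := Finset.univ) fun j _ ↦
      isSecondPrimitive_const_mul_exp (A i j * Real.exp (c j)) (hγ j)
  simp only [Finset.sum_const_zero, expField, mul_right_comm] at h ⊢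
  exact ⟨_, h⟩

lemma norm_expField_inf_le (hA : ∀ i j, 0 ≤ A i j) (t : ℝ) (x c : ι → ℝ) :
    ‖expField A γ t (x ⊓ c)‖ ≤ ∑ i, expField A γ t c i := by
  have hnonneg := expField_nonneg (γ := γ) hA t c
  refine (pi_norm_le_iff_of_nonneg (Finset.sum_nonneg fun i _ ↦ hnonneg i)).2 fun i ↦ ?_
  rw [Real.norm_of_nonneg (expField_nonneg hA _ _ _)]
  exact (expField_mono hA t inf_le_right i).trans
    (Finset.single_le_sum (fun i _ ↦ hnonneg i) (Finset.mem_univ i))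

lemma abs_expField_inf_sub_le (hA : ∀ i j, 0 ≤ A i j) (t : ℝ) (x y c : ι → ℝ) (i : ι) :
    |expField A γ t (x ⊓ c) i - expField A γ t (y ⊓ c) i| ≤ expField A γ t c i * ‖x - y‖ := by
  unfold expField
  rw [← Finset.sum_sub_distrib, Finset.sum_mul]
  refine (Finset.abs_sum_le_sum_abs _ _).trans (Finset.sum_le_sum fun j _ ↦ ?_)
  have hcoeff : 0 ≤ A i j * Real.exp (γ j * t) := mul_nonneg (hA i j) (Real.exp_pos _).le
  rw [← mul_sub, abs_mul, abs_of_nonneg hcoeff, mul_assoc _ (Real.exp (c j))]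
  gcongr
  refine (abs_exp_inf_sub_exp_inf_le _ _ _).trans ?_
  gcongr
  exact norm_le_pi_norm (x - y) j

lemma norm_expField_inf_sub_le (hA : ∀ i j, 0 ≤ A i j) (t : ℝ) (x y c : ι → ℝ) :
    ‖expField A γ t (x ⊓ c) - expField A γ t (y ⊓ c)‖ ≤
      (∑ i, expField A γ t c i) * ‖x - y‖ := by
  have hnonneg := expField_nonneg (γ := γ) hA t c
  have hsum : 0 ≤ ∑ i, expField A γ t c i := Finset.sum_nonneg fun i _ ↦ hnonneg i
  refine (pi_norm_le_iff_of_nonneg (by positivity)).2 fun i ↦ ?_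
  refine (abs_expField_inf_sub_le hA t x y c i).trans ?_
  gcongr
  exact Finset.single_le_sum (fun i _ ↦ hnonneg i) (Finset.mem_univ i)

lemma IsSecondPrimitive.le_of_neg_expField (hA : ∀ i j, 0 ≤ A i j) {c : ι → ℝ}
    {w x : ℝ → ι → ℝ} (hw : IsSecondPrimitive (fun t ↦ -expField A γ t (x t)) c w) (t : ℝ) :
    w t ≤ c :=
  fun i ↦ (isSecondPrimitive_pi.1 hw i).le_of_nonpos
    (fun _ ↦ neg_nonpos.2 (expField_nonneg hA _ _ i)) t

theorem existsUnique_isSecondPrimitive_neg_expField (hA : ∀ i j, 0 ≤ A i j) (hγ : ∀ j, 0 < γ j)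
    (c : ι → ℝ) : ∃! w, IsSecondPrimitive (fun t ↦ -expField A γ t (w t)) c w := by
  obtain ⟨g, hg⟩ := exists_isSecondPrimitive_sum_expField A hγ c
  have hcont : Continuous (Function.uncurry fun t (x : ι → ℝ) ↦ -expField A γ t (x ⊓ c)) := by
    have hinf : Continuous fun p : ℝ × (ι → ℝ) ↦ p.2 ⊓ c :=
      continuous_pi fun i ↦ ((continuous_apply i).comp continuous_snd).inf continuous_const
    exact ((continuous_expField A γ).comp (continuous_fst.prodMk hinf)).neg
  obtain ⟨w, hw, huniq⟩ := existsUnique_isSecondPrimitive hcont hg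
    (fun t x ↦ by simpa using norm_expField_inf_le hA t x c)
    (fun t x y ↦ by
      simpa only [neg_sub_neg, norm_sub_rev] using norm_expField_inf_sub_le hA t x y c) c
  refine ⟨w, ?_, fun v hv ↦ huniq v ?_⟩
  · simpa only [inf_eq_left.2 (hw.le_of_neg_expField hA _)] using hw
  · simpa only [inf_eq_left.2 (hv.le_of_neg_expField hA _)] using hv

end LogarithmicSystem

section ChangeOfVariables

lemma hasDerivAt_comp_exp {u : ℝ → ℝ} {t : ℝ} (hu : DifferentiableAt ℝ u (Real.exp t)) :
    HasDerivAt (fun t ↦ u (Real.exp t)) (deriv u (Real.exp t) * Real.exp t) t :=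
  hu.hasDerivAt.comp t (Real.hasDerivAt_exp t)

lemma hasDerivAt_deriv_comp_exp_mul_exp {u : ℝ → ℝ} {t : ℝ}
    (hu : ContDiffAt ℝ 2 u (Real.exp t)) :
    HasDerivAt (fun t ↦ deriv u (Real.exp t) * Real.exp t)
      (Real.exp t ^ 2 *
        (deriv (deriv u) (Real.exp t) + 1 / Real.exp t * deriv u (Real.exp t))) t := by
  have hderiv : ContDiffAt ℝ 1 (deriv u) (Real.exp t) := hu.derivWithin (by norm_num)
  refine ((hasDerivAt_comp_exp (hderiv.differentiableAt one_ne_zero)).mul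
    (Real.hasDerivAt_exp t)).congr_deriv ?_
  field_simp

lemma expField_add_two {ι : Type*} [Fintype ι] (A : Matrix ι ι ℝ) (β : ι → ℝ) (t : ℝ)
    (x : ι → ℝ) (i : ι) :
    expField A (fun j ↦ β j + 2) t x i =
      Real.exp t ^ 2 * ∑ j, A i j * Real.exp t ^ β j * Real.exp (x j) := by
  have hexp (b : ℝ) : Real.exp ((b + 2) * t) = Real.exp t ^ 2 * Real.exp t ^ b := by
    rw [← Real.exp_mul, ← Real.exp_nat_mul, ← Real.exp_add]
    congr 1
    push_cast
    ring
  simp only [expField, Finset.mul_sum, hexp]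
  exact Finset.sum_congr rfl fun j _ ↦ by ring

variable {n : ℕ} {A : Matrix (Fin n) (Fin n) ℝ} {β c : Fin n → ℝ}

lemma IsIVPSolution.isSecondPrimitive (hA : ∀ i j, 0 ≤ A i j) {u : Fin n → ℝ → ℝ}
    (hu : IsIVPSolution A β c u) :
    IsSecondPrimitive
      (fun t ↦ -expField A (fun j ↦ β j + 2) t fun j ↦ u j (Real.exp t)) c
      (fun t i ↦ u i (Real.exp t)) := by
  obtain ⟨hcont, hinit, hdiff, heq⟩ := hu
  refine isSecondPrimitive_pi.2 fun i ↦ .of_nonpos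
    (fun t ↦ hasDerivAt_comp_exp ((hdiff i _ (Real.exp_pos t)).differentiableAt two_ne_zero))
    (fun t ↦ (hasDerivAt_deriv_comp_exp_mul_exp (hdiff i _ (Real.exp_pos t))).congr_deriv ?_)
    (fun t ↦ neg_nonpos.2 (expField_nonneg hA _ _ i)) ?_
  · rw [Pi.neg_apply, expField_add_two, ← mul_neg]
    exact congrArg _ (eq_neg_of_add_eq_zero_left (heq i _ (Real.exp_pos t)))
  · rw [← hinit i]
    exact (hcont i).tendsto.comp <| tendsto_nhdsWithin_iff.2
      ⟨Real.tendsto_exp_atBot, .of_forall fun t ↦ (Real.exp_pos t).le⟩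

lemma IsSecondPrimitive.isIVPSolution {w : ℝ → Fin n → ℝ}
    (hw : IsSecondPrimitive (fun t ↦ -expField A (fun j ↦ β j + 2) t (w t)) c w) :
    IsIVPSolution A β c
      fun i ↦ Function.update (fun r ↦ w (Real.log r) i) 0 (c i) := by
  set u : Fin n → ℝ → ℝ := fun i ↦ Function.update (fun r ↦ w (Real.log r) i) 0 (c i)
  have hu_exp (i : Fin n) (t : ℝ) : u i (Real.exp t) = w t i := by simp [u]
  have hcont : Continuous fun t ↦ -expField A (fun j ↦ β j + 2) t (w t) :=
    ((continuous_expField A _).comp (continuous_id.prodMk hw.differentiable.continuous)).neg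
  have hdiff (i : Fin n) (r : ℝ) (hr : 0 < r) : ContDiffAt ℝ 2 (u i) r :=
    ((contDiff_pi.1 (hw.contDiff_two hcont) i).contDiffAt.comp r
      (Real.contDiffAt_log.2 hr.ne')).congr_of_eventuallyEq <|
        (eventually_ne_nhds hr.ne').mono fun s hs ↦ Function.update_of_ne hs _ _
  refine ⟨fun i ↦ ?_, fun i ↦ by simp [u], hdiff, fun i r hr ↦ ?_⟩
  · exact (continuousAt_update_same.2
      ((tendsto_pi_nhds.1 hw.tendsto i).comp Real.tendsto_log_nhdsNE_zero)).continuousWithinAt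
  · obtain ⟨t, rfl⟩ : ∃ t, Real.exp t = r := ⟨Real.log r, Real.exp_log hr⟩
    have hderiv : deriv (fun t ↦ w t i) = fun t ↦ deriv (u i) (Real.exp t) * Real.exp t := by
      simp only [← hu_exp i]
      exact deriv_eq fun s ↦
        hasDerivAt_comp_exp ((hdiff i _ (Real.exp_pos s)).differentiableAt two_ne_zero)
    have heq := (hasDerivAt_deriv_comp_exp_mul_exp (hdiff i _ hr)).unique
      (hderiv ▸ (isSecondPrimitive_pi.1 hw i).hasDerivAt_deriv t)
    rw [Pi.neg_apply, expField_add_two, ← mul_neg] at heq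
    simp only [hu_exp]
    exact add_eq_zero_iff_eq_neg.2 (mul_left_cancel₀ (pow_ne_zero 2 (Real.exp_pos t).ne') heq)

end ChangeOfVariables

theorem existence_uniqueness_radial_IVP_general {n : ℕ}
    (A : Matrix (Fin n) (Fin n) ℝ) (β : Fin n → ℝ)
    (hA : ∀ i j, 0 ≤ A i j) (hβ : ∀ i, -2 < β i) (c : Fin n → ℝ) :
    ∃ u : Fin n → ℝ → ℝ, IsIVPSolution A β c u ∧
      ∀ v : Fin n → ℝ → ℝ, IsIVPSolution A β c v →
        ∀ i, ∀ r ≥ (0:ℝ), v i r = u i r := by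
  obtain ⟨w, hw, huniq⟩ := existsUnique_isSecondPrimitive_neg_expField hA
    (γ := fun j ↦ β j + 2) (fun j ↦ by linarith [hβ j]) c
  refine ⟨_, hw.isIVPSolution, fun v hv i r hr ↦ ?_⟩
  obtain rfl | hr := hr.eq_or_lt
  · rw [hv.2.1 i, Function.update_self]
  · have hvw : v i (Real.exp (Real.log r)) = w (Real.log r) i :=
      congrFun (congrFun (huniq _ (hv.isSecondPrimitive hA)) (Real.log r)) i
    rw [Function.update_of_ne hr.ne', ← hvw, Real.exp_log hr]

theorem existence_uniqueness_radial_IVP {n : ℕ} (hn : 0 < n)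
    (A : Matrix (Fin n) (Fin n) ℝ) (β : Fin n → ℝ)
    (hA : H1 A) (hβ : ∀ i, -2 < β i) (c : Fin n → ℝ) :
    ∃ u : Fin n → ℝ → ℝ, IsIVPSolution A β c u ∧
      ∀ v : Fin n → ℝ → ℝ, IsIVPSolution A β c v →
        ∀ i, ∀ r ≥ (0:ℝ), v i r = u i r :=
  existence_uniqueness_radial_IVP_general A β hA.2.1 hβ c
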